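/- Let m ≥ 10 and let π(x) = (1 − e^{−m²/4}) g_m(x) + e^{−m²/4} u_m(x), where g_m(x) = (2π)^{−1/2} e^{−(x−m)²/2} and u_m(x) = e^{−d(x,[−m,2m])²/2} / (3m + √(2π)). Then π satisfies a log-Sobolev inequality with constant 81 m⁵: for every smooth compactly supported f : ℝ → ℝ, ∫ f² log( f² / ∫ f² π dx ) π dx ≤ 2 · 81 m⁵ · ∫ (f′)² π dx. -/

import Mathlib

open MeasureTheory Real

/-- The density of N(m, 1). -/
noncomputable def gaussAt (m x : ℝ) : ℝ := Real.exp (-(x - m) ^ 2 / 2) / Real.sqrt (2 * Real.pi)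

/-- The smoothed uniform density on [−m, 2m]. -/
noncomputable def smUnif (m x : ℝ) : ℝ :=
  Real.exp (-(Metric.infDist x (Set.Icc (-m) (2 * m))) ^ 2 / 2) / (3 * m + Real.sqrt (2 * Real.pi))

/-- The unimodal target π = (1 − e^{−m²/4}) N(m,1) + e^{−m²/4} u_m. -/
noncomputable def piDens (m x : ℝ) : ℝ :=
  (1 - Real.exp (-m ^ 2 / 4)) * gaussAt m x + Real.exp (-m ^ 2 / 4) * smUnif m x


lemma hasDerivAt_ysq0 (z : ℝ) : HasDerivAt (fun z : ℝ => (max 0 z) ^ 2) (2 * max 0 z) z := by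
  rcases lt_trichotomy z 0 with h | h | h
  · rw [max_eq_left h.le, mul_zero]
    refine (hasDerivAt_const z (0:ℝ)).congr_of_eventuallyEq ?_
    filter_upwards [Iio_mem_nhds h] with w hw
    rw [max_eq_left (le_of_lt hw)]; simp
  · subst h
    rw [max_self, mul_zero, hasDerivAt_iff_tendsto_slope]
    have h1 : Filter.Tendsto (fun z : ℝ => max 0 z) (nhdsWithin 0 {0}ᶜ) (nhds 0) := by
      have : Continuous (fun z : ℝ => max 0 z) := by fun_prop
      have h2 := this.tendsto 0
      simp only [max_self] at h2
      exact h2.mono_left nhdsWithin_le_nhds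
    refine h1.congr' ?_
    filter_upwards [self_mem_nhdsWithin] with w hw
    have hw : w ≠ 0 := hw
    rw [slope_def_field]
    rcases le_total w 0 with h | h
    · simp [max_eq_left h]
    · simp only [max_eq_right h, max_self]
      field_simp
      ring
  · rw [max_eq_right h.le]
    have : HasDerivAt (fun w : ℝ => w ^ 2) (2 * z) z := by simpa using hasDerivAt_pow 2 z
    refine this.congr_of_eventuallyEq ?_
    filter_upwards [Ioi_mem_nhds h] with w hw
    rw [max_eq_right (le_of_lt hw)]

lemma hasDerivAt_ysq (L t : ℝ) :
    HasDerivAt (fun t : ℝ => (max 0 (t - L)) ^ 2) (2 * max 0 (t - L)) t := by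
  have := (hasDerivAt_ysq0 (t - L)).comp t ((hasDerivAt_id t).sub_const L)
  simpa [Function.comp_def] using this

noncomputable def pL (A B L t : ℝ) : ℝ :=
  A * exp (-t ^ 2 / 2) + B * exp (-(max 0 (t - L)) ^ 2 / 2)

lemma pL_cont (A B L : ℝ) : Continuous (pL A B L) := by
  unfold pL; fun_prop

lemma pL_deriv (A B L t : ℝ) : HasDerivAt (pL A B L)
    (A * (exp (-t ^ 2 / 2) * (-t)) + B * (exp (-(max 0 (t - L)) ^ 2 / 2) * (-max 0 (t - L)))) t := by
  have h1 : HasDerivAt (fun t : ℝ => -t ^ 2 / 2) (-t) t := by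
    have := ((hasDerivAt_id t).pow 2).neg.div_const 2
    refine this.congr_deriv ?_
    simp; ring
  have h2 : HasDerivAt (fun t : ℝ => -(max 0 (t - L)) ^ 2 / 2) (-max 0 (t - L)) t := by
    refine ((hasDerivAt_ysq L t).neg.div_const 2).congr_deriv ?_
    ring
  exact (h1.exp.const_mul A).add (h2.exp.const_mul B)

lemma pL_deriv_le (A B L t : ℝ) (hA : 0 ≤ A) (hL : 0 ≤ L) (ht : 0 ≤ t) :
    (A * (exp (-t ^ 2 / 2) * (-t)) + B * (exp (-(max 0 (t - L)) ^ 2 / 2) * (-max 0 (t - L))))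
      ≤ -max 0 (t - L) * pL A B L t := by
  have h : max 0 (t - L) ≤ t := max_le ht (by linarith)
  have h2 : 0 ≤ A * exp (-t ^ 2 / 2) := by positivity
  unfold pL
  nlinarith

noncomputable def sL (m L t : ℝ) : ℝ :=
  6 + 3 * m ^ 2 + 4 * m ^ 2 * max 0 (L + 1 - t) + 6 * max 0 (t - L - 1)

lemma sL_nonneg (m L t : ℝ) : 0 ≤ sL m L t := by unfold sL; positivity

lemma sL_deriv (m L t : ℝ) : HasDerivWithinAt (sL m L)
    (if t < L + 1 then - (4 * m ^ 2) else 6) (Set.Ioi t) t := by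
  split_ifs with h
  · have h1 : HasDerivAt (fun t : ℝ => 6 + 3 * m ^ 2 + 4 * m ^ 2 * (L + 1 - t)) (-(4 * m ^ 2)) t := by
      have := (((hasDerivAt_id t).const_sub (L + 1)).const_mul (4 * m ^ 2)).const_add (6 + 3 * m ^ 2)
      refine this.congr_deriv ?_
      ring
    refine (h1.congr_of_eventuallyEq ?_).hasDerivWithinAt
    filter_upwards [Iio_mem_nhds h] with w hw
    have hw : w < L + 1 := hw
    unfold sL
    rw [max_eq_right (by linarith : 0 ≤ L + 1 - w), max_eq_left (by linarith)]; ring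
  · push Not at h
    have h1 : HasDerivAt (fun t : ℝ => 6 + 3 * m ^ 2 + 6 * (t - L - 1)) 6 t := by
      have := ((((hasDerivAt_id t).sub_const L).sub_const 1).const_mul 6).const_add (6 + 3 * m ^ 2)
      refine this.congr_deriv ?_
      ring
    refine h1.hasDerivWithinAt.congr ?_ ?_
    · intro w hw
      have hw : t < w := hw
      unfold sL
      rw [max_eq_left (by linarith : L + 1 - w ≤ 0), max_eq_right (by linarith)]; ring
    · unfold sL
      rw [max_eq_left (by linarith : L + 1 - t ≤ 0), max_eq_right (by linarith)]; ring

lemma sL_ineq (m L t : ℝ) (hm : 10 ≤ m) (hL : 0 ≤ L) (hL2 : L ≤ 2 * m) (ht : 0 ≤ t) :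
    (if t < L + 1 then - (4 * m ^ 2) else 6) - max 0 (t - L) * sL m L t
      + (sL m L t) ^ 2 / (81 * m ^ 4) ≤ -(2 * m ^ 2 + 3 * (max 0 (t - L)) ^ 2) := by
  have hm4 : 0 < 81 * m ^ 4 := by positivity
  have hm2 : 100 ≤ m ^ 2 := by nlinarith
  split_ifs with h
  · have hy0 : 0 ≤ max 0 (t - L) := le_max_left _ _
    have hy1 : max 0 (t - L) ≤ 1 := max_le (by norm_num) (by linarith)
    have hs := sL_nonneg m L t
    have hs2 : sL m L t ≤ 9 * m ^ 3 := by
      unfold sL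
      rw [max_eq_right (by linarith : 0 ≤ L + 1 - t), max_eq_left (by linarith)]
      nlinarith [mul_le_mul_of_nonneg_left (show L + 1 - t ≤ 2 * m + 1 by linarith) (sq_nonneg m)]
    have h3 : (sL m L t) ^ 2 / (81 * m ^ 4) ≤ m ^ 2 := by
      rw [div_le_iff₀ hm4]
      calc (sL m L t) ^ 2 ≤ (9 * m ^ 3) ^ 2 := by gcongr
        _ = _ := by ring
    nlinarith [mul_nonneg hy0 hs]
  · push Not at h
    have e : sL m L t = 3 * m ^ 2 + 6 * (t - L) := by
      unfold sL
      rw [max_eq_left (by linarith : L + 1 - t ≤ 0), max_eq_right (by linarith)]; ring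
    rw [e, max_eq_right (by linarith)]
    set y := t - L with hy
    have hy1 : 1 ≤ y := by linarith
    have h3 : (3 * m ^ 2 + 6 * y) ^ 2 / (81 * m ^ 4) ≤ 1 + y ^ 2 := by
      rw [div_le_iff₀ hm4]
      have : (3 * m ^ 2 + 6 * y) ^ 2 ≤ 18 * (m ^ 2) ^ 2 + 72 * y ^ 2 := by
        nlinarith [sq_nonneg (3 * m ^ 2 - 6 * y)]
      have h5 : (10000 : ℝ) ≤ m ^ 4 := by nlinarith
      nlinarith [mul_le_mul_of_nonneg_right h5 (sq_nonneg y)]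
    nlinarith [mul_le_mul_of_nonneg_left hy1 (sq_nonneg m)]

lemma hardy_half (A B m L T : ℝ) (f : ℝ → ℝ) (hf : ContDiff ℝ (⊤ : ℕ∞) f)
    (hA : 0 ≤ A) (hB : 0 < B) (hm : 10 ≤ m) (hL : 0 ≤ L) (hL2 : L ≤ 2 * m) (hT : 0 ≤ T) :
    ∫ t in (0:ℝ)..T, (2 * m ^ 2 + 3 * (max 0 (t - L)) ^ 2) * (f t - f 0) ^ 2 * pL A B L t
      ≤ 81 * m ^ 4 * ∫ t in (0:ℝ)..T, (deriv f t) ^ 2 * pL A B L t := by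
  have hfc := hf.continuous
  have hdc : Continuous (deriv f) := hf.continuous_deriv (by simp)
  have hp := pL_cont A B L
  have hsc : Continuous (sL m L) := by unfold sL; fun_prop
  have hm4 : 0 < 81 * m ^ 4 := by positivity
  have key := intervalIntegral.sub_le_integral_of_hasDeriv_right_of_le (a := 0) (b := T)
    (g := fun t => pL A B L t * sL m L t * (f t - f 0) ^ 2)
    (g' := fun t => ((A * (exp (-t ^ 2 / 2) * (-t)) + B * (exp (-(max 0 (t - L)) ^ 2 / 2) * (-max 0 (t - L)))) * sL m L t + pL A B L t * (if t < L + 1 then - (4 * m ^ 2) else 6)) * (f t - f 0) ^ 2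
      + pL A B L t * sL m L t * (2 * (f t - f 0) * deriv f t))
    (φ := fun t => 81 * m ^ 4 * ((deriv f t) ^ 2 * pL A B L t) -
      (2 * m ^ 2 + 3 * (max 0 (t - L)) ^ 2) * (f t - f 0) ^ 2 * pL A B L t) hT
    (by fun_prop) ?_ ?_ ?_
  · rw [intervalIntegral.integral_sub, intervalIntegral.integral_const_mul] at key
    · have h1 : 0 ≤ pL A B L T * sL m L T * (f T - f 0) ^ 2 := by
        have := sL_nonneg m L T
        have : 0 ≤ pL A B L T := by unfold pL; positivity
        positivity
      simp only [sub_self] at key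
      nlinarith
    · exact Continuous.intervalIntegrable (by fun_prop) _ _
    · exact Continuous.intervalIntegrable (by fun_prop) _ _
  · intro t ht
    have h1 := ((pL_deriv A B L t).hasDerivWithinAt (s := Set.Ioi t)).mul (sL_deriv m L t)
    have h2 : HasDerivAt (fun t => (f t - f 0) ^ 2) (2 * (f t - f 0) * deriv f t) t := by
      have hd : HasDerivAt f (deriv f t) t :=
        (hf.differentiable (by simp) t).hasDerivAt
      refine ((hd.sub_const (f 0)).pow 2).congr_deriv ?_
      simp
    exact h1.mul h2.hasDerivWithinAt
  · exact (Continuous.integrableOn_Icc (by fun_prop))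
  · intro t ht
    have ht0 : 0 ≤ t := ht.1.le
    have hd := pL_deriv_le A B L t hA hL ht0
    have hs := sL_ineq m L t hm hL hL2 ht0
    have hs0 := sL_nonneg m L t
    have hp0 : 0 < pL A B L t := by unfold pL; positivity
    set D := (A * (exp (-t ^ 2 / 2) * (-t)) + B * (exp (-(max 0 (t - L)) ^ 2 / 2) * (-max 0 (t - L))))
    set P := pL A B L t
    set S := sL m L t
    set q : ℝ := (if t < L + 1 then - (4 * m ^ 2) else 6)
    set y := max 0 (t - L)
    set g := f t - f 0
    set d := deriv f t
    show (D * S + P * q) * g ^ 2 + P * S * (2 * g * d) ≤ 81 * m ^ 4 * (d ^ 2 * P) - (2 * m ^ 2 + 3 * y ^ 2) * g ^ 2 * P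
    set C := 81 * m ^ 4
    have h1 : D * S * g ^ 2 ≤ -y * P * S * g ^ 2 := by gcongr
    have h2 : 2 * S * g * d ≤ C * d ^ 2 + S ^ 2 / C * g ^ 2 := by
      have : 0 ≤ C * (d - S * g / C) ^ 2 := by positivity
      have e : C * (d - S * g / C) ^ 2 = C * d ^ 2 - 2 * S * g * d + S ^ 2 / C * g ^ 2 := by
        field_simp
        ring
      linarith
    have h3 := mul_le_mul_of_nonneg_left hs (mul_nonneg hp0.le (sq_nonneg g))
    have h4 := mul_le_mul_of_nonneg_left h2 hp0.le
    nlinarith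

lemma cs_half (f : ℝ → ℝ) (hf : ContDiff ℝ (⊤ : ℕ∞) f) (t : ℝ) (ht : 0 ≤ t) :
    (f t - f 0) ^ 2 ≤ t * ∫ x in (0:ℝ)..t, (deriv f x) ^ 2 := by
  rcases ht.eq_or_lt with h | h
  · subst h; simp
  have hdc : Continuous (deriv f) := hf.continuous_deriv (by simp)
  have e : ∫ x in (0:ℝ)..t, deriv f x = f t - f 0 :=
    intervalIntegral.integral_deriv_eq_sub (fun x _ => hf.differentiable (by simp) x)
      (hdc.intervalIntegrable _ _)
  set μ := (f t - f 0) / t with hμ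
  have h1 : ∫ x in (0:ℝ)..t, (2 * μ * deriv f x - μ ^ 2) ≤ ∫ x in (0:ℝ)..t, (deriv f x) ^ 2 := by
    apply intervalIntegral.integral_mono_on ht
    · exact Continuous.intervalIntegrable (by fun_prop) _ _
    · exact Continuous.intervalIntegrable (by fun_prop) _ _
    · intro x _
      nlinarith [sq_nonneg (deriv f x - μ)]
  rw [intervalIntegral.integral_sub (Continuous.intervalIntegrable (by fun_prop) _ _)
    (Continuous.intervalIntegrable (by fun_prop) _ _), intervalIntegral.integral_const_mul, e] at h1
  simp only [intervalIntegral.integral_const, sub_zero, smul_eq_mul] at h1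
  have h2 := mul_le_mul_of_nonneg_left h1 ht
  have e2 : μ * t = f t - f 0 := by rw [hμ]; field_simp
  calc (f t - f 0) ^ 2 = t * (2 * μ * (f t - f 0) - t * μ ^ 2) := by rw [← e2]; ring
    _ ≤ _ := h2

lemma phi_ptwise (u a c K V : ℝ) (hK : 0 < K) (hc : c = a ^ 2 + K) (hV18 : 18 ≤ V)
    (hV : 0 < (u - a) ^ 2 → 4 * log (4 * (u - a) ^ 2 / K) ≤ V) :
    u ^ 2 * log (u ^ 2 / c) - u ^ 2 + c ≤ V * (u - a) ^ 2 + 18 * K := by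
  have hc0 : 0 < c := by rw [hc]; positivity
  by_cases h : u ^ 2 ≤ 4 * c
  · have h1 : u ^ 2 * log (u ^ 2 / c) ≤ u ^ 2 * (u ^ 2 / c - 1) := by
      rcases (sq_nonneg u).eq_or_lt with h0 | h0
      · rw [← h0]; simp
      · have := log_le_sub_one_of_pos (div_pos h0 hc0)
        gcongr
    have h2 : u ^ 2 * (u ^ 2 / c - 1) - u ^ 2 + c = (u ^ 2 - c) ^ 2 / c := by
      field_simp; ring
    have h3 : (u ^ 2 - c) ^ 2 / c ≤ 18 * (u - a) ^ 2 + 18 * K := by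
      set r := √c with hr
      have hr0 : 0 < r := sqrt_pos.mpr hc0
      have hrc : r ^ 2 = c := sq_sqrt hc0.le
      set w := |u|
      have hw0 : 0 ≤ w := abs_nonneg u
      have hw : w ^ 2 = u ^ 2 := sq_abs u
      set b := |a|
      have hb0 : 0 ≤ b := abs_nonneg a
      have hb : b ^ 2 = a ^ 2 := sq_abs a
      have hwr : w ≤ 2 * r := by
        apply le_of_sq_le_sq <;> nlinarith
      have hbr : b ≤ r := by
        apply le_of_sq_le_sq <;> nlinarith
      have hwb : (w - b) ^ 2 ≤ (u - a) ^ 2 := by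
        rw [sq_le_sq]; exact abs_abs_sub_abs_le u a
      have hrb : (r - b) ^ 2 ≤ K := by nlinarith [mul_nonneg hb0 (sub_nonneg.mpr hbr)]
      rw [div_le_iff₀ hc0, ← hw, ← hrc]
      have : (w ^ 2 - r ^ 2) ^ 2 = (w - r) ^ 2 * (w + r) ^ 2 := by ring
      rw [this]
      have h4 : (w - r) ^ 2 ≤ 2 * (u - a) ^ 2 + 2 * K := by
        have := sq_nonneg ((w - b) + (r - b))
        have e : (w - r) ^ 2 = 2 * (w - b) ^ 2 + 2 * (r - b) ^ 2 - ((w - b) + (r - b)) ^ 2 := by ring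
        linarith
      have h5 : (w + r) ^ 2 ≤ 9 * r ^ 2 := by
        calc (w + r) ^ 2 ≤ (2 * r + r) ^ 2 := by gcongr
          _ = _ := by ring
      calc (w - r) ^ 2 * (w + r) ^ 2 ≤ (2 * (u - a) ^ 2 + 2 * K) * (9 * r ^ 2) := by gcongr
        _ = _ := by ring
    nlinarith [sq_nonneg (u - a)]
  · push Not at h
    have h1 : 4 * a ^ 2 ≤ u ^ 2 := by nlinarith
    have h2 : u ^ 2 ≤ 4 * (u - a) ^ 2 := by
      have : 2 * |a| ≤ |u| := by
        apply le_of_sq_le_sq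
        · rw [mul_pow, sq_abs, sq_abs]; linarith
        · positivity
      have h3 : |u| ≤ 2 * |u - a| := by
        have := abs_sub_abs_le_abs_sub u a
        linarith
      calc u ^ 2 = |u| ^ 2 := (sq_abs u).symm
        _ ≤ (2 * |u - a|) ^ 2 := by gcongr
        _ = _ := by rw [mul_pow, sq_abs]; norm_num
    have hg : 0 < (u - a) ^ 2 := by nlinarith
    have hu : 0 < u ^ 2 := by linarith
    have h3 := hV hg
    have h4 : log (u ^ 2 / c) ≤ log (4 * (u - a) ^ 2 / K) := by
      apply log_le_log (by positivity)
      gcongr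
      rw [hc]; nlinarith [sq_nonneg a]
    have h5 : 0 ≤ log (u ^ 2 / c) := by
      apply log_nonneg
      rw [le_div_iff₀ hc0]; linarith
    have h6 : u ^ 2 * log (u ^ 2 / c) ≤ (4 * (u - a) ^ 2) * log (4 * (u - a) ^ 2 / K) := by
      gcongr
    nlinarith

lemma V_bound (A B m L t E : ℝ) (f : ℝ → ℝ) (hf : ContDiff ℝ (⊤ : ℕ∞) f)
    (hA : 0 ≤ A) (hB : exp (-m ^ 2 / 4) / (3 * m + 3) ≤ B)
    (hm : 10 ≤ m) (hL : 0 ≤ L) (hL2 : L ≤ 2 * m) (ht : 0 ≤ t) (hE : 0 < E)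
    (hEt : ∫ x in (0:ℝ)..t, (deriv f x) ^ 2 * pL A B L x ≤ E) (hg : 0 < (f t - f 0) ^ 2) :
    4 * log (4 * (f t - f 0) ^ 2 / (m ^ 3 * E)) ≤ 2 * m ^ 2 + 3 * (max 0 (t - L)) ^ 2 := by
  have hdc : Continuous (deriv f) := hf.continuous_deriv (by simp)
  have hp := pL_cont A B L
  set y := max 0 (t - L) with hy
  have hy0 : 0 ≤ y := le_max_left _ _
  set q := exp (-m ^ 2 / 4) / (3 * m + 3) * exp (-y ^ 2 / 2) with hq
  have hm3 : 0 < 3 * m + 3 := by linarith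
  have hq0 : 0 < q := by positivity
  have hI : q * ∫ x in (0:ℝ)..t, (deriv f x) ^ 2 ≤ E := by
    refine le_trans ?_ hEt
    rw [← intervalIntegral.integral_const_mul]
    apply intervalIntegral.integral_mono_on ht
    · exact Continuous.intervalIntegrable (by fun_prop) _ _
    · exact Continuous.intervalIntegrable (by fun_prop) _ _
    · intro x hx
      rw [mul_comm]
      gcongr
      unfold pL
      have h1 : exp (-y ^ 2 / 2) ≤ exp (-(max 0 (x - L)) ^ 2 / 2) := by
        have : max 0 (x - L) ≤ y := by
          rw [hy]
          exact max_le_max le_rfl (by linarith [hx.2])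
        gcongr
      have h2 : 0 ≤ A * exp (-x ^ 2 / 2) := by positivity
      have hB0 : 0 ≤ B := le_trans (by positivity) hB
      have h3 : q ≤ B * exp (-(max 0 (x - L)) ^ 2 / 2) := by
        rw [hq]; gcongr
      linarith
  have h1 := cs_half f hf t ht
  have h2 : (f t - f 0) ^ 2 ≤ t * (E / q) := by
    refine h1.trans ?_
    gcongr
    rw [le_div_iff₀ hq0, mul_comm]; exact hI
  have hty : t ≤ 2 * m + y := by
    have := le_max_right 0 (t - L)
    linarith
  set z := 4 * (2 * m + y) * (3 * m + 3) / m ^ 3 with hz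
  have hz0 : 0 < z := by positivity
  have h3 : 4 * (f t - f 0) ^ 2 / (m ^ 3 * E) ≤ z * exp (m ^ 2 / 4 + y ^ 2 / 2) := by
    have e : z * exp (m ^ 2 / 4 + y ^ 2 / 2) = 4 * ((2 * m + y) * (E / q)) / (m ^ 3 * E) := by
      have e1 : exp (m ^ 2 / 4 + y ^ 2 / 2) = (exp (-m ^ 2 / 4) * exp (-y ^ 2 / 2))⁻¹ := by
        rw [← exp_add, ← exp_neg]; congr 1; ring
      rw [hz, e1, hq]; field_simp
    rw [e]
    gcongr
    exact h2.trans (by gcongr)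
  have h4 : log (4 * (f t - f 0) ^ 2 / (m ^ 3 * E)) ≤ z - 1 + (m ^ 2 / 4 + y ^ 2 / 2) := by
    calc _ ≤ log (z * exp (m ^ 2 / 4 + y ^ 2 / 2)) := log_le_log (by positivity) h3
      _ = log z + (m ^ 2 / 4 + y ^ 2 / 2) := by
        rw [log_mul hz0.ne' (exp_pos _).ne', log_exp]
      _ ≤ _ := by gcongr; exact log_le_sub_one_of_pos hz0
  have h5 : z ≤ 3 + y := by
    rw [hz, div_le_iff₀ (by positivity)]
    have e1 : 10 * m ^ 2 ≤ m ^ 3 := by nlinarith [sq_nonneg m]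
    have e2 : m ≤ m ^ 2 := by nlinarith
    have e3 : m ^ 2 * y ≥ 100 * y := mul_le_mul_of_nonneg_right (by nlinarith) hy0
    have e4 : m * y ≤ m ^ 2 * y := by gcongr
    nlinarith [mul_le_mul_of_nonneg_right e1 hy0]
  nlinarith [sq_nonneg (y - 2)]

lemma half_bound (A B m L T E : ℝ) (f : ℝ → ℝ) (hf : ContDiff ℝ (⊤ : ℕ∞) f)
    (hA : 0 ≤ A) (hB : exp (-m ^ 2 / 4) / (3 * m + 3) ≤ B)
    (hm : 10 ≤ m) (hL : 0 ≤ L) (hL2 : L ≤ 2 * m) (hT : 0 ≤ T) (hE : 0 < E)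
    (hEt : ∫ x in (0:ℝ)..T, (deriv f x) ^ 2 * pL A B L x ≤ E) :
    ∫ t in (0:ℝ)..T, ((f t) ^ 2 * log ((f t) ^ 2 / ((f 0) ^ 2 + m ^ 3 * E)) - (f t) ^ 2
        + ((f 0) ^ 2 + m ^ 3 * E)) * pL A B L t
      ≤ 81 * m ^ 4 * (∫ t in (0:ℝ)..T, (deriv f t) ^ 2 * pL A B L t)
        + 18 * (m ^ 3 * E) * ∫ t in (0:ℝ)..T, pL A B L t := by
  have hfc := hf.continuous
  have hdc : Continuous (deriv f) := hf.continuous_deriv (by simp)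
  have hp := pL_cont A B L
  have hm3 : 0 < 3 * m + 3 := by linarith
  have hB0 : 0 < B := lt_of_lt_of_le (by positivity) hB
  have hp0 : ∀ t, 0 < pL A B L t := fun t => by unfold pL; positivity
  have hc0 : 0 < (f 0) ^ 2 + m ^ 3 * E := by positivity
  have hcont : Continuous (fun t => (f t) ^ 2 * log ((f t) ^ 2 / ((f 0) ^ 2 + m ^ 3 * E))) := by
    have e : (fun t => (f t) ^ 2 * log ((f t) ^ 2 / ((f 0) ^ 2 + m ^ 3 * E))) =
        fun t => ((f 0) ^ 2 + m ^ 3 * E) * ((f t) ^ 2 / ((f 0) ^ 2 + m ^ 3 * E) * log ((f t) ^ 2 / ((f 0) ^ 2 + m ^ 3 * E))) := by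
      funext t; field_simp
    rw [e]
    exact continuous_const.mul (Real.continuous_mul_log.comp (by fun_prop))
  refine le_trans ?_ (add_le_add_left (hardy_half A B m L T f hf hA hB0 hm hL hL2 hT) _)
  rw [← intervalIntegral.integral_const_mul, ← intervalIntegral.integral_add
    (Continuous.intervalIntegrable (by fun_prop) _ _) (Continuous.intervalIntegrable (by fun_prop) _ _)]
  apply intervalIntegral.integral_mono_on hT
  · exact Continuous.intervalIntegrable (by fun_prop) _ _
  · exact Continuous.intervalIntegrable (by fun_prop) _ _
  · intro t ht
    have := phi_ptwise (f t) (f 0) _ (m ^ 3 * E) (2 * m ^ 2 + 3 * (max 0 (t - L)) ^ 2)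
      (by positivity) rfl (by nlinarith [sq_nonneg (max 0 (t - L))])
      (V_bound A B m L t E f hf hA hB hm hL hL2 ht.1 hE (by
        refine le_trans ?_ hEt
        apply intervalIntegral.integral_mono_interval le_rfl ht.1 ht.2
        · exact Filter.Eventually.of_forall fun x => mul_nonneg (sq_nonneg _) (hp0 x).le
        · exact Continuous.intervalIntegrable (by fun_prop) _ _))
    have h2 := mul_le_mul_of_nonneg_right this (hp0 t).le
    linarith

lemma infDist_right (m t : ℝ) (hm : 10 ≤ m) (ht : 0 ≤ t) :
    Metric.infDist (m + t) (Set.Icc (-m) (2 * m)) = max 0 (t - m) := by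
  rcases le_total t m with h | h
  · rw [max_eq_left (by linarith)]
    exact Metric.infDist_zero_of_mem ⟨by linarith, by linarith⟩
  · rw [max_eq_right (by linarith)]
    apply le_antisymm
    · refine (Metric.infDist_le_dist_of_mem (y := 2 * m) (Set.mem_Icc.mpr ⟨by linarith, le_rfl⟩)).trans ?_
      rw [Real.dist_eq, abs_of_nonneg (by linarith)]; linarith
    · refine (Metric.le_infDist ⟨2 * m, by constructor <;> linarith⟩).mpr ?_
      intro y hy
      rw [Real.dist_eq]
      exact le_trans (by linarith [hy.2]) (le_abs_self _)

lemma infDist_left (m t : ℝ) (hm : 10 ≤ m) (ht : 0 ≤ t) :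
    Metric.infDist (m - t) (Set.Icc (-m) (2 * m)) = max 0 (t - 2 * m) := by
  rcases le_total t (2 * m) with h | h
  · rw [max_eq_left (by linarith)]
    exact Metric.infDist_zero_of_mem ⟨by linarith, by linarith⟩
  · rw [max_eq_right (by linarith)]
    apply le_antisymm
    · refine (Metric.infDist_le_dist_of_mem (y := -m) (Set.mem_Icc.mpr ⟨le_rfl, by linarith⟩)).trans ?_
      rw [Real.dist_eq, abs_of_nonpos (by linarith)]; linarith
    · refine (Metric.le_infDist ⟨2 * m, by constructor <;> linarith⟩).mpr ?_
      intro y hy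
      rw [Real.dist_eq]
      exact le_trans (by linarith [hy.1]) (neg_le_abs _)

noncomputable def cA (m : ℝ) : ℝ := (1 - exp (-m ^ 2 / 4)) / √(2 * π)
noncomputable def cB (m : ℝ) : ℝ := exp (-m ^ 2 / 4) / (3 * m + √(2 * π))

lemma cA_nonneg (m : ℝ) : 0 ≤ cA m := by
  have : exp (-m ^ 2 / 4) ≤ 1 := exp_le_one_iff.mpr (by nlinarith [sq_nonneg m])
  unfold cA
  exact div_nonneg (by linarith) (sqrt_nonneg _)

lemma cB_ge (m : ℝ) (hm : 10 ≤ m) : exp (-m ^ 2 / 4) / (3 * m + 3) ≤ cB m := by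
  unfold cB
  have : √(2 * π) ≤ 3 := by
    rw [sqrt_le_left (by norm_num)]
    linarith [pi_lt_four]
  gcongr

lemma pi_right (m t : ℝ) (hm : 10 ≤ m) (ht : 0 ≤ t) :
    piDens m (m + t) = pL (cA m) (cB m) m t := by
  unfold piDens gaussAt smUnif pL cA cB
  rw [infDist_right m t hm ht, add_sub_cancel_left]
  ring

lemma pi_left (m t : ℝ) (hm : 10 ≤ m) (ht : 0 ≤ t) :
    piDens m (m - t) = pL (cA m) (cB m) (2 * m) t := by
  unfold piDens gaussAt smUnif pL cA cB
  rw [infDist_left m t hm ht, show (m - t - m) ^ 2 = t ^ 2 by ring]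
  ring

lemma piDens_cont (m : ℝ) : Continuous (piDens m) := by
  unfold piDens gaussAt smUnif
  have := Metric.continuous_infDist_pt (Set.Icc (-m) (2 * m))
  fun_prop

lemma piDens_nonneg (m x : ℝ) (hm : 10 ≤ m) : 0 ≤ piDens m x := by
  have : exp (-m ^ 2 / 4) ≤ 1 := exp_le_one_iff.mpr (by nlinarith [sq_nonneg m])
  have h2 : 0 ≤ 1 - exp (-m ^ 2 / 4) := by linarith
  unfold piDens gaussAt smUnif
  positivity

noncomputable def kk : ℝ → ℝ := Set.indicator (Set.Ioi 0) fun x => exp (-(1 / 2) * x ^ 2)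

lemma kk_int : Integrable kk :=
  (integrable_exp_neg_mul_sq (by norm_num : (0:ℝ) < 1 / 2)).indicator measurableSet_Ioi

lemma kk_integral : ∫ x, kk x = √(2 * π) / 2 := by
  unfold kk
  rw [integral_indicator measurableSet_Ioi, integral_gaussian_Ioi]
  congr 2; ring

lemma smUnif_eq (m x : ℝ) (hm : 10 ≤ m) :
    exp (-(Metric.infDist x (Set.Icc (-m) (2 * m))) ^ 2 / 2) =
      kk (-m - x) + (Set.Icc (-m) (2 * m)).indicator (fun _ => (1:ℝ)) x + kk (x - 2 * m) := by
  unfold kk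
  rcases lt_or_ge x (-m) with h | h
  · have e := infDist_left m (m - x) hm (by linarith)
    rw [sub_sub_cancel] at e
    rw [e, max_eq_right (by linarith), Set.indicator_of_mem (by simp; linarith),
      Set.indicator_of_notMem (by simp; intros; linarith),
      Set.indicator_of_notMem (by simp; linarith)]
    simp only [add_zero]
    congr 1; ring
  rcases le_or_gt x (2 * m) with h2 | h2
  · rw [Metric.infDist_zero_of_mem (Set.mem_Icc.mpr ⟨h, h2⟩), Set.indicator_of_notMem (by simp; linarith),
      Set.indicator_of_mem (Set.mem_Icc.mpr ⟨h, h2⟩), Set.indicator_of_notMem (by simp; linarith)]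
    simp
  · have e := infDist_right m (x - m) hm (by linarith)
    rw [add_sub_cancel] at e
    rw [e, max_eq_right (by linarith), Set.indicator_of_notMem (by simp; linarith),
      Set.indicator_of_notMem (by simp; intros; linarith),
      Set.indicator_of_mem (by simp; linarith)]
    simp only [zero_add]
    congr 1; ring

lemma smUnif_int (m : ℝ) (hm : 10 ≤ m) : Integrable (smUnif m) ∧ ∫ x, smUnif m x = 1 := by
  have i1 : Integrable (fun x => kk (-m - x)) := kk_int.comp_sub_left (-m)
  have i3 : Integrable (fun x => kk (x - 2 * m)) := kk_int.comp_sub_right (2 * m)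
  have i2 : Integrable ((Set.Icc (-m) (2 * m)).indicator (fun _ => (1:ℝ))) := by
    rw [integrable_indicator_iff measurableSet_Icc]
    exact integrableOn_const (by simp)
  have e : smUnif m = fun x => (kk (-m - x) + (Set.Icc (-m) (2 * m)).indicator (fun _ => (1:ℝ)) x
      + kk (x - 2 * m)) / (3 * m + √(2 * π)) := by
    funext x
    unfold smUnif
    rw [smUnif_eq m x hm]
  rw [e]
  refine ⟨((i1.add i2).add i3).div_const _, ?_⟩
  have h12 : Integrable (fun x => kk (-m - x) + (Set.Icc (-m) (2 * m)).indicator (fun _ => (1:ℝ)) x) := i1.add i2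
  rw [integral_div, integral_add h12 i3, integral_add i1 i2,
    integral_sub_left_eq_self kk volume (-m), integral_sub_right_eq_self kk (2 * m), kk_integral,
    integral_indicator measurableSet_Icc]
  have : (0:ℝ) ≤ 2 * m + m := by linarith
  simp [this]
  have h3 : 0 < 3 * m + √2 * √π := by positivity
  field_simp
  ring

lemma gaussAt_int (m : ℝ) : Integrable (gaussAt m) ∧ ∫ x, gaussAt m x = 1 := by
  have e : gaussAt m = ProbabilityTheory.gaussianPDFReal m 1 := by
    funext x
    simp [gaussAt, ProbabilityTheory.gaussianPDFReal]
    ring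
  rw [e]
  exact ⟨ProbabilityTheory.integrable_gaussianPDFReal m 1,
    ProbabilityTheory.integral_gaussianPDFReal_eq_one m one_ne_zero⟩

lemma piDens_int (m : ℝ) (hm : 10 ≤ m) : Integrable (piDens m) ∧ ∫ x, piDens m x = 1 := by
  obtain ⟨h1, h2⟩ := gaussAt_int m
  obtain ⟨h3, h4⟩ := smUnif_int m hm
  have i1 := h1.const_mul (1 - exp (-m ^ 2 / 4))
  have i2 := h3.const_mul (exp (-m ^ 2 / 4))
  refine ⟨i1.add i2, ?_⟩
  unfold piDens
  rw [integral_add i1 i2, integral_const_mul, integral_const_mul, h2, h4]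
  ring

lemma split_int (m T : ℝ) (hm : 10 ≤ m) (hT : 0 ≤ T) (h : ℝ → ℝ) (hh : Continuous h) :
    ∫ x in (m - T)..(m + T), h x * piDens m x =
      (∫ t in (0:ℝ)..T, h (m + t) * pL (cA m) (cB m) m t)
      + ∫ t in (0:ℝ)..T, h (m - t) * pL (cA m) (cB m) (2 * m) t := by
  have hp := piDens_cont m
  have e1 : ∫ t in (0:ℝ)..T, h (m + t) * pL (cA m) (cB m) m t
      = ∫ x in m..(m + T), h x * piDens m x := by
    have := intervalIntegral.integral_comp_add_left (a := 0) (b := T) (fun x => h x * piDens m x) m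
    rw [add_zero] at this
    rw [← this]
    apply intervalIntegral.integral_congr
    intro t ht
    rw [Set.uIcc_of_le hT] at ht
    simp only [pi_right m t hm ht.1]
  have e2 : ∫ t in (0:ℝ)..T, h (m - t) * pL (cA m) (cB m) (2 * m) t
      = ∫ x in (m - T)..m, h x * piDens m x := by
    have := intervalIntegral.integral_comp_sub_left (a := 0) (b := T) (fun x => h x * piDens m x) m
    rw [sub_zero] at this
    rw [← this]
    apply intervalIntegral.integral_congr
    intro t ht
    rw [Set.uIcc_of_le hT] at ht
    simp only [pi_left m t hm ht.1]
  rw [e1, e2, add_comm (∫ x in m..(m + T), h x * piDens m x), intervalIntegral.integral_add_adjacent_intervals]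
  · exact Continuous.intervalIntegrable (by fun_prop) _ _
  · exact Continuous.intervalIntegrable (by fun_prop) _ _

lemma flog_cont (f : ℝ → ℝ) (hf : Continuous f) (c : ℝ) (hc : 0 < c) :
    Continuous (fun t => (f t) ^ 2 * log ((f t) ^ 2 / c)) := by
  have e : (fun t => (f t) ^ 2 * log ((f t) ^ 2 / c)) =
      fun t => c * ((f t) ^ 2 / c * log ((f t) ^ 2 / c)) := by
    funext t; field_simp
  rw [e]
  exact continuous_const.mul (Real.continuous_mul_log.comp (by fun_prop))

lemma main_T (m T E : ℝ) (f : ℝ → ℝ) (hf : ContDiff ℝ (⊤ : ℕ∞) f)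
    (hm : 10 ≤ m) (hT : 0 ≤ T) (hE : 0 < E)
    (hET : ∫ x in (m - T)..(m + T), (deriv f x) ^ 2 * piDens m x ≤ E) :
    ∫ x in (m - T)..(m + T), ((f x) ^ 2 * log ((f x) ^ 2 / ((f m) ^ 2 + m ^ 3 * E)) - (f x) ^ 2
        + ((f m) ^ 2 + m ^ 3 * E)) * piDens m x
      ≤ 81 * m ^ 4 * E + 18 * (m ^ 3 * E) * ∫ x in (m - T)..(m + T), piDens m x := by
  have hfc := hf.continuous
  have hdc : Continuous (deriv f) := hf.continuous_deriv (by simp)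
  have hc0 : 0 < (f m) ^ 2 + m ^ 3 * E := by positivity
  have hcont := flog_cont f hfc _ hc0
  have s1 := split_int m T hm hT (fun x => (deriv f x) ^ 2) (by fun_prop)
  have s2 := split_int m T hm hT (fun x => (f x) ^ 2 * log ((f x) ^ 2 / ((f m) ^ 2 + m ^ 3 * E)) - (f x) ^ 2
        + ((f m) ^ 2 + m ^ 3 * E)) (by fun_prop)
  have s3 := split_int m T hm hT (fun x => 1) (by fun_prop)
  simp only [one_mul] at s3
  have hA := cA_nonneg m
  have hB := cB_ge m hm
  have hB0 : 0 ≤ cB m := le_trans (by positivity) hB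
  have n1 : ∀ L : ℝ, ∀ h : ℝ → ℝ, 0 ≤ ∫ t in (0:ℝ)..T, (h t) ^ 2 * pL (cA m) (cB m) L t := by
    intro L h
    apply intervalIntegral.integral_nonneg hT
    intro t _
    have : 0 ≤ pL (cA m) (cB m) L t := by unfold pL; positivity
    positivity
  have d1 : ∀ t, deriv (fun t => f (m + t)) t = deriv f (m + t) := fun t =>
    deriv_comp_const_add (f := f) m t
  have d2 : ∀ t, deriv (fun t => f (m - t)) t = - deriv f (m - t) := fun t =>
    deriv_comp_const_sub (f := f) m t
  have n2 := n1 m (fun t => deriv f (m + t))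
  have n3 := n1 (2 * m) (fun t => deriv f (m - t))
  have r1 := half_bound (cA m) (cB m) m m T E (fun t => f (m + t)) (hf.comp (by fun_prop)) hA hB hm
    (by linarith) (by linarith) hT hE (by simp only [d1]; linarith)
  have r2 := half_bound (cA m) (cB m) m (2 * m) T E (fun t => f (m - t)) (hf.comp (by fun_prop)) hA hB hm
    (by linarith) (by linarith) hT hE (by simp only [d2, neg_sq]; linarith)
  simp only [d1, add_zero] at r1
  simp only [d2, neg_sq, sub_zero] at r2
  rw [s2, s3]
  rw [s1] at hET
  have := mul_le_mul_of_nonneg_left hET (by positivity : 0 ≤ 81 * m ^ 4)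
  linarith

/-- For m ≥ 10, the unimodal target
π = (1−e^{−m²/4})N(m,1) + e^{−m²/4}u_m satisfies a log-Sobolev inequality with
constant 81m⁵. -/
theorem unimodal_target_log_sobolev
    (m : ℝ) (hm : 10 ≤ m) :
    ∀ f : ℝ → ℝ, ContDiff ℝ (⊤ : ℕ∞) f → HasCompactSupport f →
      (∫ x, (f x) ^ 2 * Real.log ((f x) ^ 2 / ∫ y, (f y) ^ 2 * piDens m y) * piDens m x)
        ≤ 2 * (81 * m ^ 5) * ∫ x, (deriv f x) ^ 2 * piDens m x := by
  intro f hf hcs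
  have hfc := hf.continuous
  have hdc : Continuous (deriv f) := hf.continuous_deriv (by simp)
  have hp := piDens_cont m
  have hp0 := fun x => piDens_nonneg m x hm
  have hZ0 : 0 ≤ ∫ y, (f y) ^ 2 * piDens m y :=
    integral_nonneg fun x => mul_nonneg (sq_nonneg _) (hp0 x)
  have hE0 : 0 ≤ ∫ x, (deriv f x) ^ 2 * piDens m x :=
    integral_nonneg fun x => mul_nonneg (sq_nonneg _) (hp0 x)
  set Z := ∫ y, (f y) ^ 2 * piDens m y with hZ
  set E0 := ∫ x, (deriv f x) ^ 2 * piDens m x with hE0def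
  rcases hZ0.eq_or_lt with hz | hz
  · rw [← hz]
    simp only [div_zero, log_zero, mul_zero, zero_mul, integral_zero]
    positivity
  have hK : 0 < 2 * (81 * m ^ 5) := by positivity
  apply le_of_forall_pos_le_add
  intro ε hε
  obtain ⟨E, hEdef⟩ : ∃ E, E = E0 + ε / (2 * (81 * m ^ 5)) := ⟨_, rfl⟩
  have hEpos : 0 < E := by rw [hEdef]; positivity
  have hEle : E0 ≤ E := by rw [hEdef]; linarith [div_pos hε hK]
  have hKE : 2 * (81 * m ^ 5) * E0 + ε = 2 * (81 * m ^ 5) * E := by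
    rw [hEdef]; field_simp
  rw [hKE]
  obtain ⟨c, hc⟩ : ∃ c, c = (f m) ^ 2 + m ^ 3 * E := ⟨_, rfl⟩
  have hc0 : 0 < c := by rw [hc]; positivity
  have hcont := flog_cont f hfc c hc0
  obtain ⟨R, hR0, hR⟩ := hcs.isCompact.isBounded.subset_ball_lt 0 m
  have hsub : ∀ T, R ≤ T → tsupport f ⊆ Set.Ioc (m - T) (m + T) := by
    intro T hT x hx
    have := hR hx
    rw [Real.ball_eq_Ioo] at this
    exact ⟨by linarith [this.1], by linarith [this.2]⟩
  have i1 : Integrable (fun x => (f x) ^ 2 * log ((f x) ^ 2 / c) * piDens m x) := by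
    apply Continuous.integrable_of_hasCompactSupport (by fun_prop)
    refine hcs.mono ?_
    intro x hx hx0
    exact hx (by simp only [hx0]; simp)
  have i2 : Integrable (fun x => (f x) ^ 2 * piDens m x) := by
    apply Continuous.integrable_of_hasCompactSupport (by fun_prop)
    refine hcs.mono ?_
    intro x hx hx0
    exact hx (by simp only [hx0]; simp)
  have hEnt : (∫ x, (f x) ^ 2 * Real.log ((f x) ^ 2 / Z) * piDens m x) =
      (∫ x, (f x) ^ 2 * log ((f x) ^ 2 / c) * piDens m x) + log (c / Z) * Z := by
    rw [hZ, ← integral_const_mul, ← integral_add i1 (i2.const_mul _), ← hZ]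
    congr 1
    funext x
    by_cases h0 : f x = 0
    · simp [h0]
    · have h2 : (f x) ^ 2 ≠ 0 := pow_ne_zero 2 h0
      rw [log_div h2 hz.ne', log_div h2 hc0.ne', log_div hc0.ne' hz.ne']
      ring
  have hlog : log (c / Z) * Z ≤ c - Z := by
    have := mul_le_mul_of_nonneg_right (log_le_sub_one_of_pos (div_pos hc0 hz)) hz.le
    have e : (c / Z - 1) * Z = c - Z := by field_simp
    linarith
  obtain ⟨hpi, hp1⟩ := piDens_int m hm
  have hlim : Filter.Tendsto (fun T : ℝ => ∫ x in (m - T)..(m + T), piDens m x)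
      Filter.atTop (nhds 1) := by
    rw [← hp1]
    apply intervalIntegral_tendsto_integral hpi
    · exact Filter.tendsto_atBot_add_const_left _ m Filter.tendsto_neg_atTop_atBot
    · exact Filter.tendsto_atTop_add_const_left _ m Filter.tendsto_id
  have hlim2 : Filter.Tendsto (fun T : ℝ => 81 * m ^ 4 * E + 18 * (m ^ 3 * E)
      + c * (1 - ∫ x in (m - T)..(m + T), piDens m x))
      Filter.atTop (nhds (81 * m ^ 4 * E + 18 * (m ^ 3 * E) + c * (1 - 1))) :=
    ((hlim.const_sub 1).const_mul c).const_add _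
  have hfin : (∫ x, (f x) ^ 2 * Real.log ((f x) ^ 2 / Z) * piDens m x)
      ≤ 81 * m ^ 4 * E + 18 * (m ^ 3 * E) + c * (1 - 1) := by
    apply ge_of_tendsto hlim2
    filter_upwards [Filter.eventually_ge_atTop R] with T hT
    have hs := hsub T hT
    have hT0 : 0 ≤ T := hR0.le.trans hT
    have eE : ∫ x in (m - T)..(m + T), (deriv f x) ^ 2 * piDens m x = E0 := by
      apply intervalIntegral.integral_eq_integral_of_support_subset
      refine subset_trans ?_ hs
      intro x hx
      apply support_deriv_subset
      intro h0
      exact hx (by simp only [h0]; simp)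
    have hM := main_T m T E f hf hm hT0 hEpos (by rw [eE]; exact hEle)
    rw [← hc] at hM
    have eI : ∫ x in (m - T)..(m + T), ((f x) ^ 2 * log ((f x) ^ 2 / c) * piDens m x
        - (f x) ^ 2 * piDens m x)
        = (∫ x, (f x) ^ 2 * log ((f x) ^ 2 / c) * piDens m x) - Z := by
      rw [hZ, ← integral_sub i1 i2]
      apply intervalIntegral.integral_eq_integral_of_support_subset
      refine subset_trans ?_ hs
      intro x hx
      apply subset_tsupport
      intro h0
      exact hx (by simp only [h0]; simp)
    have eS : ∫ x in (m - T)..(m + T), ((f x) ^ 2 * log ((f x) ^ 2 / c) - (f x) ^ 2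
        + c) * piDens m x = ((∫ x, (f x) ^ 2 * log ((f x) ^ 2 / c) * piDens m x) - Z)
          + c * ∫ x in (m - T)..(m + T), piDens m x := by
      rw [← eI, ← intervalIntegral.integral_const_mul, ← intervalIntegral.integral_add
        (Continuous.intervalIntegrable (by fun_prop) _ _)
        (Continuous.intervalIntegrable (by fun_prop) _ _)]
      congr 1
      funext x
      ring
    have hP : ∫ x in (m - T)..(m + T), piDens m x ≤ 1 := by
      rw [← hp1, intervalIntegral.integral_of_le (by linarith)]
      exact setIntegral_le_integral hpi (Filter.Eventually.of_forall hp0)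
    have hP2 := mul_le_mul_of_nonneg_left hP (by positivity : 0 ≤ 18 * (m ^ 3 * E))
    rw [hEnt]
    linarith
  refine hfin.trans ?_
  have h4 : m ^ 4 ≤ m ^ 5 := pow_le_pow_right₀ (by linarith) (by norm_num)
  have h3 : m ^ 3 ≤ m ^ 5 := pow_le_pow_right₀ (by linarith) (by norm_num)
  have := mul_le_mul_of_nonneg_right h4 hEpos.le
  have := mul_le_mul_of_nonneg_right h3 hEpos.le
  nlinarith
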